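/- Let φ(x,t) = t^p + a(x) t^q with 1 < p < q < ∞, a a nonnegative function in C^{0,α}(ℝⁿ) for some α ∈ (0,1], and assume q/p ≤ 1 + α/n. Let Ω ⊆ ℝⁿ be open and 0 < r_o ≤ 1. Fix a sign choice: let a*_{y,R} denote either a^+_{y,R} or a^-_{y,R}, used consistently, with φ*_{y,R}(t) = t^p + a*_{y,R} t^q. Suppose there is c₀ > 0 such that for every z ∈ ℝⁿ∖Ω, y ∈ ℝⁿ, 0 < r < r_o, R > 0 and u ∈ Lip_0(Ω): ⨍_{B(z,r)} φ*_{y,R}(|u|) dx ≤ c₀ · (1 + a*_{y,R} ((⨍_{B(z,r)} |r∇u|^p)^{1/p})^{q−p}) · ⨍_{B(z,r)} |r∇u|^p dx. Then there is a constant c = c(n,p,q,c₀) such that for every z ∈ Ω with r_z := dist(z,∂Ω) < r_o, every y ∈ ℝⁿ, R > 0 and u ∈ Lip_0(Ω): φ*_{y,R}(|(u)_{B(z,r_z)}|) ≤ c · (1 + a*_{y,R} ((⨍_{B(z,2r_z)} |r_z ∇u|^p)^{1/p})^{q−p}) · ⨍_{B(z,2r_z)} |r_z ∇u|^p dx. 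-/

import Mathlib

open MeasureTheory Metric Set

noncomputable section

/-- Euclidean space `ℝⁿ`. -/
abbrev En (n : ℕ) : Type := EuclideanSpace ℝ (Fin n)

/-- Norm of the (a.e. defined, by Rademacher's theorem) gradient of `u` at `x`. -/
def gnorm {n : ℕ} (u : En n → ℝ) (x : En n) : ℝ := ‖fderiv ℝ u x‖

/-- Admissible test functions for the level-`t` capacity of `E` in `O`:
Lipschitz on the closure of `O`, `u ≥ t` on `E`, `u = 0` on `∂O`. -/
def Adm {n : ℕ} (E O : Set (En n)) (t : ℝ) : Set (En n → ℝ) :=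
  {u | (∃ K, LipschitzOnWith K u (closure O)) ∧ (∀ x ∈ E, t ≤ u x) ∧
    ∀ x ∈ frontier O, u x = 0}

/-- Level-`t` variational capacity with integrand `ψ` and normalization `ψm`. -/
def capLevel {n : ℕ} (ψ : En n → ℝ → ℝ) (ψm : ℝ → ℝ)
    (E O : Set (En n)) (t : ℝ) : ℝ :=
  sInf ((fun u => ∫ x in O, ψ x (gnorm u x) / ψm t) '' Adm E O t)

/-- Infimal capacity with integrand `ψ` and normalization `ψm`. -/
def capInfGen {n : ℕ} (ψ : En n → ℝ → ℝ) (ψm : ℝ → ℝ) (E O : Set (En n)) : ℝ :=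
  ⨅ t : Ioi (0 : ℝ), capLevel ψ ψm E O (t : ℝ)

/-- The double-phase integrand `φ(x,t) = t^p + a(x) t^q`. -/
def phi {n : ℕ} (a : En n → ℝ) (p q : ℝ) (x : En n) (t : ℝ) : ℝ :=
  t ^ p + a x * t ^ q

/-- `a_O^- = inf_{x ∈ O} a(x)`. -/
def aInfOn {n : ℕ} (a : En n → ℝ) (O : Set (En n)) : ℝ := sInf (a '' O)

/-- `a_O^+ = sup_{x ∈ O} a(x)`. -/
def aSupOn {n : ℕ} (a : En n → ℝ) (O : Set (En n)) : ℝ := sSup (a '' O)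

/-- `φ_O^-(t) = t^p + a_O^- t^q`. -/
def phiMinus {n : ℕ} (a : En n → ℝ) (p q : ℝ) (O : Set (En n)) (t : ℝ) : ℝ :=
  t ^ p + aInfOn a O * t ^ q

/-- Level-`t` variational capacity for the double-phase integrand. -/
def capPhiLevel {n : ℕ} (a : En n → ℝ) (p q t : ℝ) (E O : Set (En n)) : ℝ :=
  capLevel (phi a p q) (phiMinus a p q O) E O t

/-- Infimal `φ`-capacity. -/
def capPhiInf {n : ℕ} (a : En n → ℝ) (p q : ℝ) (E O : Set (En n)) : ℝ :=
  ⨅ t : Ioi (0 : ℝ), capPhiLevel a p q (t : ℝ) E O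

/-- Variational `p`-capacity. -/
def capP {n : ℕ} (p : ℝ) (E O : Set (En n)) : ℝ :=
  sInf ((fun u => ∫ x in O, gnorm u x ^ p) '' Adm E O 1)

/-- The rescaled set `{x ∈ B̄(0,1/2) : z + r x ∈ E}`. -/
def shiftedSet {n : ℕ} (E : Set (En n)) (z : En n) (r : ℝ) : Set (En n) :=
  {x ∈ closedBall (0 : En n) (1 / 2) | z + r • x ∈ E}

/-- Local uniform infimal `φ`-fatness with parameters `cfat` and `ro`. -/
def LocUnifPhiFat {n : ℕ} (a : En n → ℝ) (p q : ℝ) (E : Set (En n))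
    (cfat ro : ℝ) : Prop :=
  ∀ z ∈ E, ∀ r : ℝ, 0 < r → r < ro →
    cfat ≤ capPhiInf (fun x => a (z + r • x)) p q (shiftedSet E z r) (ball (0 : En n) 1)

/-- Local uniform `p`-fatness with parameters `cfat` and `ro`. -/
def LocUnifPFat {n : ℕ} (p : ℝ) (E : Set (En n)) (cfat ro : ℝ) : Prop :=
  ∀ z ∈ E, ∀ r : ℝ, 0 < r → r < ro →
    cfat ≤ capP p (shiftedSet E z r) (ball (0 : En n) 1)

/-- `Lip_0(Ω)`: Lipschitz functions with compact support contained in `Ω`,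
extended by zero to `ℝⁿ`. -/
def Lip0 {n : ℕ} (Ω : Set (En n)) : Set (En n → ℝ) :=
  {u | (∃ K, LipschitzWith K u) ∧ HasCompactSupport u ∧ tsupport u ⊆ Ω}

/-- Restricted centered maximal operator `M_R f(x) = sup_{0<r<R} ⨍_{B(x,r)} |f|`. -/
def maxOp {n : ℕ} (R : ℝ) (f : En n → ℝ) (x : En n) : ℝ :=
  ⨆ r : Ioo (0 : ℝ) R, ⨍ y in ball x (r : ℝ), |f y|

lemma measurable_gnorm {n : ℕ} (u : En n → ℝ) : Measurable (gnorm u) :=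
  (measurable_fderiv ℝ u).norm

lemma gnorm_nonneg {n : ℕ} (u : En n → ℝ) (x : En n) : 0 ≤ gnorm u x := norm_nonneg _

lemma gnorm_le {n : ℕ} {u : En n → ℝ} {K : NNReal} (hu : LipschitzWith K u) (x : En n) :
    gnorm u x ≤ K := norm_fderiv_le_of_lipschitz ℝ hu

lemma integrableOn_ball_of_bound {n : ℕ} {f : En n → ℝ} (hf : Measurable f) (z : En n) (r : ℝ)
    {C : ℝ} (hC : ∀ x ∈ ball z r, |f x| ≤ C) : IntegrableOn f (ball z r) :=
  Measure.integrableOn_of_bounded (M := C) measure_ball_lt_top.ne hf.aestronglyMeasurable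
    ((ae_restrict_mem measurableSet_ball).mono hC)

lemma integrableOn_ball_rpow {n : ℕ} {f : En n → ℝ} (hf : Measurable f) (hf0 : ∀ x, 0 ≤ f x)
    {z : En n} {r C s : ℝ} (hs : 0 ≤ s) (hC : ∀ x ∈ ball z r, f x ≤ C) :
    IntegrableOn (fun x => f x ^ s) (ball z r) :=
  integrableOn_ball_of_bound (hf.pow_const s) z r (C := C ^ s) fun x hx => by
    rw [abs_of_nonneg (Real.rpow_nonneg (hf0 x) s)]
    exact Real.rpow_le_rpow (hf0 x) (hC x hx) hs

/-- Jensen's inequality for powers on balls. -/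
lemma rpow_average_ball_le {n : ℕ} {f : En n → ℝ} (hf : Measurable f) (hf0 : ∀ x, 0 ≤ f x)
    {z : En n} {r C s : ℝ} (hr : 0 < r) (hs : 1 ≤ s) (hC : ∀ x ∈ ball z r, f x ≤ C) :
    (⨍ x in ball z r, f x) ^ s ≤ ⨍ x in ball z r, f x ^ s := by
  have hs0 : 0 ≤ s := zero_le_one.trans hs
  refine (convexOn_rpow hs).map_set_average_le
    (Real.continuous_rpow_const hs0).continuousOn isClosed_Ici
    (measure_ball_pos _ _ hr).ne' measure_ball_lt_top.ne (ae_of_all _ hf0) ?_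
    (integrableOn_ball_rpow hf hf0 hs0 hC)
  simpa using integrableOn_ball_rpow hf hf0 zero_le_one hC

lemma average_ball_nonneg {n : ℕ} {f : En n → ℝ} (hf0 : ∀ x, 0 ≤ f x) (z : En n) (r : ℝ) :
    0 ≤ ⨍ x in ball z r, f x := by
  rw [setAverage_eq]
  exact smul_nonneg (by positivity) (integral_nonneg hf0)

lemma volume_real_ball_two_mul {n : ℕ} (c z : En n) (r : ℝ) :
    volume.real (ball z (2 * r)) = 2 ^ n * volume.real (ball c r) := by
  have h2 : (0 : ℝ) < 2 := two_pos
  rw [measureReal_def, Measure.addHaar_ball_mul_of_pos volume z h2 r, measureReal_def,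
    Measure.addHaar_ball_center volume c, ENNReal.toReal_mul,
    ENNReal.toReal_ofReal (by positivity), finrank_euclideanSpace_fin]

lemma volume_real_ball_pos {n : ℕ} (z : En n) {r : ℝ} (hr : 0 < r) :
    0 < volume.real (ball z r) :=
  ENNReal.toReal_pos (measure_ball_pos _ _ hr).ne' measure_ball_lt_top.ne

lemma volume_inv_mul_integral_ball_two_mul {n : ℕ} (f : En n → ℝ) (c z : En n) {r : ℝ}
    (hr : 0 < r) :
    (volume.real (ball c r))⁻¹ * ∫ x in ball z (2 * r), f x =
      2 ^ n * ⨍ x in ball z (2 * r), f x := by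
  have := volume_real_ball_pos c hr
  rw [setAverage_eq, volume_real_ball_two_mul c z r, smul_eq_mul]
  field_simp

/-- Averages over a ball contained in the double ball are controlled. -/
lemma average_ball_le_two_pow_mul {n : ℕ} {f : En n → ℝ} (hf0 : ∀ x, 0 ≤ f x) {c z : En n}
    {r : ℝ} (hr : 0 < r) (hsub : ball c r ⊆ ball z (2 * r))
    (hf : IntegrableOn f (ball z (2 * r))) :
    ⨍ x in ball c r, f x ≤ 2 ^ n * ⨍ x in ball z (2 * r), f x := by
  rw [← volume_inv_mul_integral_ball_two_mul f c z hr, setAverage_eq, smul_eq_mul]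
  gcongr
  exact ae_of_all _ hf0

lemma setIntegral_ball_comp_add {n : ℕ} (f : En n → ℝ) (c v : En n) (r : ℝ) :
    ∫ x in ball c r, f (x + v) = ∫ x in ball (c + v) r, f x := by
  have h := (measurePreserving_add_right volume v).setIntegral_preimage_emb
    (measurableEmbedding_addRight v) f (ball (c + v) r)
  have hb : (fun x => x + v) ⁻¹' ball (c + v) r = ball c r := by
    ext x
    simp
  rw [← h, hb]

/-- Differentiation of ball integrals of a Lipschitz function under translation. -/
lemma LipschitzWith.hasDerivAt_setIntegral_ball {n : ℕ} {u : En n → ℝ} {K : NNReal}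
    (hu : LipschitzWith K u) (c w : En n) (r t : ℝ) :
    HasDerivAt (fun t : ℝ => ∫ x in ball c r, u (x + t • w))
      (∫ x in ball c r, fderiv ℝ u (x + t • w) w) t := by
  have hcont (t : ℝ) : Continuous fun x => u (x + t • w) := by
    have := hu.continuous
    fun_prop
  refine (hasDerivAt_integral_of_dominated_loc_of_lip (s := univ)
    (bound := fun _ => K * ‖w‖) Filter.univ_mem
    (Filter.Eventually.of_forall fun t => (hcont t).aestronglyMeasurable)
    ?_ ?_ ?_ ?_ ?_).2
  · exact ((hcont t).continuousOn.integrableOn_compact (isCompact_closedBall c r)).mono_set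
      ball_subset_closedBall
  · exact ((measurable_fderiv_apply_const ℝ u w).comp
      (measurable_add_const (t • w))).aestronglyMeasurable
  · refine ae_of_all _ fun x => LipschitzOnWith.of_dist_le_mul fun a _ b _ => ?_
    refine (hu.dist_le_mul _ _).trans ?_
    rw [Real.coe_nnabs, abs_of_nonneg (by positivity), dist_add_left, dist_eq_norm, ← sub_smul,
      norm_smul, dist_eq_norm]
    exact le_of_eq (by ring)
  · exact integrableOn_const measure_ball_lt_top.ne
  · have hd : ∀ᵐ x : En n, DifferentiableAt ℝ u (x + t • w) :=
      (measurePreserving_add_right volume (t • w)).quasiMeasurePreserving.ae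
        hu.ae_differentiableAt
    refine ae_restrict_of_ae (hd.mono fun x hx => ?_)
    have hl : HasDerivAt (fun s : ℝ => x + s • w) w t := by
      simpa using ((hasDerivAt_id t).smul_const w).const_add x
    exact hx.hasFDerivAt.comp_hasDerivAt t hl

/-- The integrals of a Lipschitz function over a ball and a translate of it differ by at most the
integral of the gradient over any ball containing all intermediate translates. -/
lemma LipschitzWith.abs_setIntegral_ball_sub_le {n : ℕ} {u : En n → ℝ} {K : NNReal}
    (hu : LipschitzWith K u) {c w z : En n} {r R : ℝ}
    (hsub : ∀ t ∈ Icc (0 : ℝ) 1, ball (c + t • w) r ⊆ ball z R) :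
    |(∫ x in ball (c + w) r, u x) - ∫ x in ball c r, u x| ≤
      ∫ x in ball z R, ‖w‖ * gnorm u x := by
  have hint : IntegrableOn (fun x => ‖w‖ * gnorm u x) (ball z R) :=
    integrableOn_ball_of_bound ((measurable_gnorm u).const_mul ‖w‖) z R
      (C := ‖w‖ * K) fun x _ => by
        rw [abs_of_nonneg (mul_nonneg (norm_nonneg _) (gnorm_nonneg u x))]
        gcongr
        exact gnorm_le hu x
  have h := norm_image_sub_le_of_norm_deriv_le_segment_01'
    (fun t _ => (hu.hasDerivAt_setIntegral_ball c w r t).hasDerivWithinAt)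
    (C := ∫ x in ball z R, ‖w‖ * gnorm u x) fun t ht => by
      rw [setIntegral_ball_comp_add (fun x => fderiv ℝ u x w)]
      refine (norm_integral_le_integral_norm _).trans ?_
      have hsub' := hsub t (Ico_subset_Icc_self ht)
      have hle (x : En n) : ‖fderiv ℝ u x w‖ ≤ ‖w‖ * gnorm u x := by
        rw [mul_comm]
        exact (fderiv ℝ u x).le_opNorm w
      refine (integral_mono_of_nonneg (ae_of_all _ fun _ => norm_nonneg _)
        (hint.mono_set hsub') (ae_of_all _ hle)).trans ?_
      exact setIntegral_mono_set hint
        (ae_of_all _ fun x => mul_nonneg (norm_nonneg _) (gnorm_nonneg u x)) hsub'.eventuallyLE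
  simpa [setIntegral_ball_comp_add u, Real.norm_eq_abs] using h

lemma add_rpow_le_two_rpow_mul {s q S D : ℝ} (hs : 1 ≤ s) (hsq : s ≤ q) (hS : 0 ≤ S)
    (hD : 0 ≤ D) : (S + D) ^ s ≤ 2 ^ q * (S ^ s + D ^ s) := by
  have h : (S + D) ^ s ≤ 2 ^ (s - 1) * (S ^ s + D ^ s) := by
    lift S to NNReal using hS
    lift D to NNReal using hD
    exact_mod_cast NNReal.rpow_add_le_mul_rpow_add_rpow S D hs
  refine h.trans ?_
  gcongr
  · exact one_le_two
  · linarith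

/-- The algebraic combination of the boundary estimate and the translation estimate. -/
lemma rpow_add_mul_rpow_le {p q c0 k b M S D G G' : ℝ} (hp : 1 ≤ p) (hpq : p ≤ q) (hc0 : 0 ≤ c0)
    (hk : 1 ≤ k) (hb : 0 ≤ b) (hM : 0 ≤ M) (hS : 0 ≤ S) (hD : 0 ≤ D) (hG : 0 ≤ G) (hG' : 0 ≤ G')
    (hMSD : M ≤ S + D) (hDG : D ≤ k * G ^ (1 / p)) (hGG : G' ≤ k * G)
    (hSG : S ^ p + b * S ^ q ≤ c0 * (1 + b * (G' ^ (1 / p)) ^ (q - p)) * G') :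
    M ^ p + b * M ^ q ≤
      2 ^ q * (c0 * (k ^ (1 / p)) ^ (q - p) * k + k ^ q) *
        (1 + b * (G ^ (1 / p)) ^ (q - p)) * G := by
  have hp0 : 0 < p := by linarith
  have hqp : 0 ≤ q - p := by linarith
  have hq1 : 1 ≤ q := hp.trans hpq
  set X := (G ^ (1 / p)) ^ (q - p) with hX
  set L := (k ^ (1 / p)) ^ (q - p) with hL
  have hX0 : 0 ≤ X := by positivity
  have hL1 : 1 ≤ L := Real.one_le_rpow (Real.one_le_rpow hk (by positivity)) hqp
  have hGp : (G ^ (1 / p)) ^ p = G := by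
    rw [one_div, Real.rpow_inv_rpow hG hp0.ne']
  have hGq : (G ^ (1 / p)) ^ q = X * G := by
    nth_rw 2 [← hGp]
    rw [hX, ← Real.rpow_add_of_nonneg (by positivity) hqp hp0.le]
    congr 1
    ring
  have hS' : S ^ p + b * S ^ q ≤ c0 * L * k * (1 + b * X) * G := by
    have h1 : (G' ^ (1 / p)) ^ (q - p) ≤ L * X := by
      rw [hL, hX, ← Real.mul_rpow (by positivity) (by positivity),
        ← Real.mul_rpow (by positivity) hG]
      gcongr
    calc S ^ p + b * S ^ q ≤ c0 * (1 + b * (G' ^ (1 / p)) ^ (q - p)) * G' := hSG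
      _ ≤ c0 * (L + b * (L * X)) * (k * G) := by gcongr
      _ = _ := by ring
  have hD' : D ^ p + b * D ^ q ≤ k ^ q * (1 + b * X) * G := by
    have h1 : D ^ p ≤ k ^ q * G := by
      calc D ^ p ≤ (k * G ^ (1 / p)) ^ p := by gcongr
        _ = k ^ p * G := by rw [Real.mul_rpow (by positivity) (by positivity), hGp]
        _ ≤ k ^ q * G := by gcongr
    have h2 : D ^ q ≤ k ^ q * (X * G) := by
      calc D ^ q ≤ (k * G ^ (1 / p)) ^ q := by gcongr
        _ = k ^ q * (X * G) := by rw [Real.mul_rpow (by positivity) (by positivity), hGq]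
    calc D ^ p + b * D ^ q ≤ k ^ q * G + b * (k ^ q * (X * G)) := by gcongr
      _ = _ := by ring
  calc M ^ p + b * M ^ q ≤ (S + D) ^ p + b * (S + D) ^ q := by gcongr
    _ ≤ 2 ^ q * (S ^ p + D ^ p) + b * (2 ^ q * (S ^ q + D ^ q)) := by
        gcongr
        · exact add_rpow_le_two_rpow_mul hp hpq hS hD
        · exact add_rpow_le_two_rpow_mul hq1 le_rfl hS hD
    _ = 2 ^ q * ((S ^ p + b * S ^ q) + (D ^ p + b * D ^ q)) := by ring
    _ ≤ 2 ^ q * (c0 * L * k * (1 + b * X) * G + k ^ q * (1 + b * X) * G) := by gcongr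
    _ = _ := by ring

/-- **From the boundary Poincaré inequality to the mean-value Poincaré inequality**
(Theorem 1.9, (3) ⇒ (4) labelling of the paper: here (2) ⇒ (3)). -/
theorem mean_value_poincare_of_boundary_poincare
    (n : ℕ) (hn : 0 < n) (p q c0 : ℝ)
    (hp : 1 < p) (hpq : p < q) (hc0 : 0 < c0) :
    ∃ c : ℝ, 0 < c ∧
      ∀ (α A ro : ℝ) (a : En n → ℝ) (Ω : Set (En n)) (astar : En n → ℝ → ℝ),
        0 < α → α ≤ 1 → (∀ x, 0 ≤ a x) → 0 ≤ A →
        (∀ x y, |a x - a y| ≤ A * dist x y ^ α) →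
        q / p ≤ 1 + α / n →
        IsOpen Ω → 0 < ro → ro ≤ 1 →
        ((∀ y R, astar y R = aSupOn a (ball y R)) ∨
         (∀ y R, astar y R = aInfOn a (ball y R))) →
        (∀ z ∈ Ωᶜ, ∀ (y : En n) (r R : ℝ), 0 < r → r < ro → 0 < R →
          ∀ u ∈ Lip0 Ω,
            (⨍ x in ball z r, (|u x| ^ p + astar y R * |u x| ^ q)) ≤
              c0 * (1 + astar y R *
                    ((⨍ x in ball z r, (r * gnorm u x) ^ p) ^ (1 / p)) ^ (q - p)) *
                (⨍ x in ball z r, (r * gnorm u x) ^ p)) →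
        ∀ z ∈ Ω, ∀ rz : ℝ, rz = infDist z (frontier Ω) → rz < ro →
          ∀ (y : En n) (R : ℝ), 0 < R → ∀ u ∈ Lip0 Ω,
            |⨍ x in ball z rz, u x| ^ p + astar y R * |⨍ x in ball z rz, u x| ^ q ≤
              c * (1 + astar y R *
                    ((⨍ x in ball z (2 * rz), (rz * gnorm u x) ^ p) ^ (1 / p)) ^ (q - p)) *
                (⨍ x in ball z (2 * rz), (rz * gnorm u x) ^ p) := by
  have hk1 : (1 : ℝ) ≤ 2 ^ n := one_le_pow₀ one_le_two
  refine ⟨2 ^ q * (c0 * (((2 : ℝ) ^ n) ^ (1 / p)) ^ (q - p) * 2 ^ n + ((2 : ℝ) ^ n) ^ q),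
    by positivity, ?_⟩
  intro α A ro a Ω astar _ _ ha _ _ _ hΩ _ _ hastar hbdry z hz rz hrz hrzo y R hR u hu
  have hb : 0 ≤ astar y R := by
    rcases hastar with h | h <;> rw [h]
    · exact Real.sSup_nonneg (by rintro _ ⟨x, _, rfl⟩; exact ha x)
    · exact Real.sInf_nonneg (by rintro _ ⟨x, _, rfl⟩; exact ha x)
  have hzero : (0 : ℝ) ^ p = 0 ∧ (0 : ℝ) ^ q = 0 :=
    ⟨Real.zero_rpow (by linarith), Real.zero_rpow (by linarith)⟩
  have hrz0 : 0 ≤ rz := hrz ▸ infDist_nonneg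
  rcases hrz0.eq_or_lt with h0 | hr
  · simp [← h0, hzero]
  have hne : (frontier Ω).Nonempty := by
    by_contra hne
    rw [not_nonempty_iff_eq_empty.1 hne, infDist_empty] at hrz
    exact hr.ne' hrz
  obtain ⟨c, hc, hzc⟩ := isClosed_frontier.exists_infDist_eq_dist hne z
  have hcΩ : c ∈ Ωᶜ := by
    rw [hΩ.frontier_eq] at hc
    exact hc.2
  obtain ⟨⟨K, hK⟩, hcomp, -⟩ := id hu
  obtain ⟨C, hC⟩ := hcomp.exists_bound_of_continuous hK.continuous
  have hw : ‖z - c‖ = rz := by rw [hrz, hzc, dist_eq_norm]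
  have hsub : ∀ t ∈ Icc (0 : ℝ) 1, ball (c + t • (z - c)) rz ⊆ ball z (2 * rz) := by
    intro t ht
    refine ball_subset_ball' ?_
    have he : c + t • (z - c) - z = -((1 - t) • (z - c)) := by module
    rw [dist_eq_norm, he, norm_neg, norm_smul, hw, Real.norm_eq_abs,
      abs_of_nonneg (by linarith [ht.2])]
    nlinarith [ht.1]
  have hsubc : ball c rz ⊆ ball z (2 * rz) := by simpa using hsub 0 (by simp)
  have hgm : Measurable fun x => rz * gnorm u x := measurable_const.mul (measurable_gnorm u)
  have hg0 (x : En n) : 0 ≤ rz * gnorm u x := mul_nonneg hrz0 (gnorm_nonneg u x)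
  have hgK (x : En n) : rz * gnorm u x ≤ rz * K :=
    mul_le_mul_of_nonneg_left (gnorm_le hK x) hrz0
  have hp0 : 0 ≤ p := by linarith
  have hgp0 (x : En n) : 0 ≤ (rz * gnorm u x) ^ p := Real.rpow_nonneg (hg0 x) p
  have hum : Measurable fun x => |u x| := hK.continuous.abs.measurable
  have huC (s : ℝ) (hs : 0 ≤ s) : IntegrableOn (fun x => |u x| ^ s) (ball c rz) :=
    integrableOn_ball_rpow hum (fun x => abs_nonneg _) hs fun x _ => hC x
  set G := ⨍ x in ball z (2 * rz), (rz * gnorm u x) ^ p with hG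
  have hG0 : 0 ≤ G := average_ball_nonneg hgp0 _ _
  set S := ⨍ x in ball c rz, |u x| with hS
  set T := ⨍ x in ball z (2 * rz), rz * gnorm u x with hT
  have hT0 : 0 ≤ T := average_ball_nonneg hg0 _ _
  have hTG : T ≤ G ^ (1 / p) := by
    rw [one_div, Real.le_rpow_inv_iff_of_pos hT0 hG0 (by linarith)]
    exact rpow_average_ball_le hgm hg0 (by linarith) hp.le fun x _ => hgK x
  refine rpow_add_mul_rpow_le (S := S) (D := 2 ^ n * T)
    (G' := ⨍ x in ball c rz, (rz * gnorm u x) ^ p) hp.le hpq.le hc0.le hk1 hb (abs_nonneg _)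
    (average_ball_nonneg (fun _ => abs_nonneg _) _ _) (by positivity) hG0
    (average_ball_nonneg hgp0 _ _) ?_ (by gcongr) ?_ ?_
  · have hdiff := hK.abs_setIntegral_ball_sub_le (c := c) (w := z - c) hsub
    rw [add_sub_cancel, hw] at hdiff
    have hV : volume.real (ball z rz) = volume.real (ball c rz) := by
      rw [measureReal_def, measureReal_def, Measure.addHaar_ball_center volume c,
        Measure.addHaar_ball_center volume z]
    have habs : |∫ x in ball c rz, u x| ≤ ∫ x in ball c rz, |u x| := abs_integral_le_integral_abs
    rw [hT, ← volume_inv_mul_integral_ball_two_mul _ c z hr, hS, setAverage_eq, setAverage_eq, hV,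
      smul_eq_mul, smul_eq_mul, abs_mul, abs_of_nonneg (by positivity), ← mul_add]
    gcongr
    have := abs_sub_abs_le_abs_sub (∫ x in ball z rz, u x) (∫ x in ball c rz, u x)
    linarith
  · exact average_ball_le_two_pow_mul hgp0 hr hsubc
      (integrableOn_ball_rpow hgm hg0 hp0 fun x _ => hgK x)
  · refine le_trans ?_ (hbdry c hcΩ y rz R hr hrzo hR u hu)
    have hsplit : ⨍ x in ball c rz, (|u x| ^ p + astar y R * |u x| ^ q) =
        (⨍ x in ball c rz, |u x| ^ p) + astar y R * ⨍ x in ball c rz, |u x| ^ q := by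
      simp only [setAverage_eq, smul_eq_mul]
      rw [integral_add (huC p hp0) ((huC q (by linarith)).const_mul _), integral_const_mul]
      ring
    rw [hsplit]
    gcongr
    · exact rpow_average_ball_le hum (fun _ => abs_nonneg _) hr hp.le fun x _ => hC x
    · exact rpow_average_ball_le hum (fun _ => abs_nonneg _) hr (by linarith) fun x _ => hC x
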